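/- Exact second-step argument reduction (correctness of Algorithm 1): Assume p > 4, x is a p-bit FPN, R is a positive normal p-bit FPN, C₁ is a round-to-nearest of 1/R to p − 2 bits, C₁ is not exactly a power of 2, C₁ ≥ 2^(p+max(−1,p+N−2))·λ, 2^(−N) is a normal p-bit FPN, |x·R| ≤ 2^(p−N−2) − 2^(−N), z₀ is a round-to-nearest of 3·2^(p−N−2) + x·R to p bits, z is a round-to-nearest of z₀ − 3·2^(p−N−2) to p bits, C₂ is a p-bit FPN that is an integer multiple of 8·ulp∘²(C₁) and satisfies |C₂| ≤ 4·ulp(C₁). Define u = x − z·C₁ (which is a p-bit FPN, equal to its rounding), let v₁ be a round-to-nearest of u − z·C₂ to p bits, let p₁ be a round-to-nearest of z·C₂ to p bits and p₂ = z·C₂ − p₁, let t₁ be a round-to-nearest of u − p₁ to p bits and t₂ = (u − p₁) − t₁. Then: p₂ and t₂ are p-bit FPNs (Fast2Mult and Fast2Sum work correctly); the numbers t₁ − v₁, (t₁ − v₁) + t₂, and ((t₁ − v₁) + t₂) − p₂ are all p-bit FPNs (so the computation v₂ = ∘(∘(∘(t₁ − v₁) + t₂) − p₂) commits no rounding error and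 v₂ = t₁ − v₁ + t₂ − p₂ exactly); and v₁ + v₂ = x − z·C₁ − z·C₂ exactly. -/

import Mathlib

noncomputable section

/-- `x` is a `k`-bit (binary) floating-point number with minimal exponent `emin`:
there exist integers `m`, `e` with `|m| < 2^k`, `e ≥ emin` and `x = m·2^e`. -/
def IsFPN (emin k : ℤ) (x : ℝ) : Prop :=
  ∃ m e : ℤ, |(m : ℝ)| < (2 : ℝ) ^ k ∧ emin ≤ e ∧ x = (m : ℝ) * (2 : ℝ) ^ e

/-- `x` is a normal `p`-bit floating-point number: it admits a representation
with `2^(p-1) ≤ |m| < 2^p`. -/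
def IsNormalFPN (emin p : ℤ) (x : ℝ) : Prop :=
  ∃ m e : ℤ, (2 : ℝ) ^ (p - 1) ≤ |(m : ℝ)| ∧ |(m : ℝ)| < (2 : ℝ) ^ p ∧
    emin ≤ e ∧ x = (m : ℝ) * (2 : ℝ) ^ e

/-- `r` is a round-to-nearest of `a` to `k` bits (ties broken in any way). -/
def RN (emin k : ℤ) (a r : ℝ) : Prop :=
  IsFPN emin k r ∧ ∀ y : ℝ, IsFPN emin k y → |a - r| ≤ |a - y|

/-- Unit in the last place at precision `p`: `ulp(x) = 2^(⌊log₂|x|⌋ - p + 1)`. -/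
def ulp (p : ℤ) (x : ℝ) : ℝ := (2 : ℝ) ^ (Int.log 2 |x| - p + 1)

/-!
Let `2 ^ c ≤ C₁ < 2 ^ (c + 1)`. The magic constant `3 * 2 ^ (p - N - 2)` forces `z` to be a
multiple of `2 ^ (-N)` nearest to `x * R`, so both `u` and `z * C₂` are at most
`2 ^ (c - N + 1)` in absolute value. If `z ≠ 0`, then `x` is not too small, and `x`, `z * C₁` and
`z * C₂` are all multiples of `2 ^ g` with `g = c - N - 2 * p + 3 ≥ emin`; rounding preserves such
multiples. Each quantity claimed to be representable is a sum of at most three rounding errors of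
numbers of size at most `2 ^ (g + 2 * p - 1)`. Hence it is a multiple of `2 ^ g` of size at most
`2 ^ (g + p)`, and these are `p`-bit numbers. If `z = 0`, nothing is rounded at all.
-/

/-- The additive group of integer multiples of `2 ^ g`. The `k`-bit floating-point
numbers are the points of size below `2 ^ (g + k)` of the grids with `g ≥ emin`; the grids, unlike
the set of floating-point numbers, are closed under addition. -/
def dyadicGrid (g : ℤ) : AddSubgroup ℝ := AddSubgroup.zmultiples ((2 : ℝ) ^ g)

section DyadicGrid

variable {g h : ℤ} {a b : ℝ}

lemma mem_dyadicGrid : a ∈ dyadicGrid g ↔ ∃ n : ℤ, a = n * (2 : ℝ) ^ g := by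
  simp only [dyadicGrid, AddSubgroup.mem_zmultiples_iff, zsmul_eq_mul, eq_comm]

lemma two_zpow_mem_dyadicGrid (hgh : g ≤ h) : (2 : ℝ) ^ h ∈ dyadicGrid g := by
  obtain ⟨n, rfl⟩ := Int.le.dest hgh
  exact mem_dyadicGrid.2 ⟨2 ^ n, by rw [zpow_add₀ two_ne_zero, mul_comm]; norm_cast⟩

lemma dyadicGrid_antitone : Antitone dyadicGrid := fun _ _ hgh =>
  AddSubgroup.zmultiples_le_of_mem (two_zpow_mem_dyadicGrid hgh)

lemma mul_mem_dyadicGrid (ha : a ∈ dyadicGrid g) (hb : b ∈ dyadicGrid h) :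
    a * b ∈ dyadicGrid (g + h) := by
  obtain ⟨m, rfl⟩ := mem_dyadicGrid.1 ha
  obtain ⟨n, rfl⟩ := mem_dyadicGrid.1 hb
  exact mem_dyadicGrid.2 ⟨m * n, by rw [zpow_add₀ two_ne_zero]; push_cast; ring⟩

lemma two_zpow_le_abs_of_mem_dyadicGrid (ha : a ∈ dyadicGrid g) (hne : a ≠ 0) :
    (2 : ℝ) ^ g ≤ |a| := by
  obtain ⟨n, rfl⟩ := mem_dyadicGrid.1 ha
  have hn : (1 : ℝ) ≤ |(n : ℝ)| := by
    exact_mod_cast Int.one_le_abs (by rintro rfl; simp at hne : n ≠ 0)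
  rw [abs_mul, abs_of_pos (by positivity : (0 : ℝ) < 2 ^ g)]
  exact le_mul_of_one_le_left (by positivity) hn

lemma two_zpow_le_abs_of_abs_sub_le (hb : b ∈ dyadicGrid g) (hne : b ≠ 0)
    (hab : |a - b| ≤ (2 : ℝ) ^ (g - 1)) : (2 : ℝ) ^ (g - 1) ≤ |a| := by
  have hbabs := two_zpow_le_abs_of_mem_dyadicGrid hb hne
  have htri := abs_sub_abs_le_abs_sub b a
  rw [abs_sub_comm] at htri
  have hg : (2 : ℝ) ^ g = 2 * 2 ^ (g - 1) := by rw [zpow_sub_one₀ two_ne_zero]; ring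
  linarith

end DyadicGrid

section IsFPN

variable {emin k g j : ℤ} {a x : ℝ}

lemma isFPN_zero : IsFPN emin k 0 :=
  ⟨0, emin, by rw [Int.cast_zero, abs_zero]; positivity, le_rfl, by simp⟩

lemma IsFPN.neg (hx : IsFPN emin k x) : IsFPN emin k (-x) := by
  obtain ⟨m, e, hm, he, rfl⟩ := hx
  exact ⟨-m, e, by simpa using hm, he, by push_cast; ring⟩

lemma isFPN_two_zpow (hk : 0 < k) (hj : emin ≤ j) : IsFPN emin k ((2 : ℝ) ^ j) :=
  ⟨1, j, by simpa using one_lt_zpow₀ (one_lt_two (α := ℝ)) hk, hj, by simp⟩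

lemma isFPN_of_mem_dyadicGrid (ha : a ∈ dyadicGrid g) (hk : 0 < k) (hg : emin ≤ g)
    (hle : |a| ≤ (2 : ℝ) ^ (g + k)) : IsFPN emin k a := by
  rcases hle.lt_or_eq with hlt | heq
  · obtain ⟨m, rfl⟩ := mem_dyadicGrid.1 ha
    have hpos : (0 : ℝ) < 2 ^ g := by positivity
    rw [abs_mul, abs_of_pos hpos, zpow_add₀ two_ne_zero, mul_comm] at hlt
    exact ⟨m, g, lt_of_mul_lt_mul_left hlt hpos.le, hg, rfl⟩
  · have hpow : IsFPN emin k ((2 : ℝ) ^ (g + k)) := isFPN_two_zpow hk (by omega)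
    rcases (abs_eq (by positivity)).1 heq with rfl | rfl
    · exact hpow
    · exact hpow.neg

lemma IsFPN.mem_dyadicGrid_emin (hx : IsFPN emin k x) : x ∈ dyadicGrid emin := by
  obtain ⟨m, e, -, he, rfl⟩ := hx
  exact dyadicGrid_antitone he (mem_dyadicGrid.2 ⟨m, rfl⟩)

lemma IsFPN.mem_dyadicGrid_of_two_zpow_le (hx : IsFPN emin k x) (hj : (2 : ℝ) ^ j ≤ |x|) :
    x ∈ dyadicGrid (j - k + 1) := by
  obtain ⟨m, e, hm, -, rfl⟩ := hx
  have hpos : (0 : ℝ) < 2 ^ e := by positivity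
  have hlt : (2 : ℝ) ^ j < 2 ^ (k + e) := by
    rw [zpow_add₀ two_ne_zero]
    rw [abs_mul, abs_of_pos hpos] at hj
    exact hj.trans_lt (mul_lt_mul_of_pos_right hm hpos)
  have hjke : j < k + e := (zpow_lt_zpow_iff_right₀ one_lt_two).1 hlt
  exact dyadicGrid_antitone (by omega) (mem_dyadicGrid.2 ⟨m, rfl⟩)

lemma IsFPN.emin_le_of_two_zpow (h : IsFPN emin k ((2 : ℝ) ^ j)) : emin ≤ j := by
  have hle := two_zpow_le_abs_of_mem_dyadicGrid h.mem_dyadicGrid_emin (by positivity)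
  rw [abs_of_pos (by positivity)] at hle
  exact (zpow_le_zpow_iff_right₀ one_lt_two).1 hle

lemma IsNormalFPN.isFPN (hx : IsNormalFPN emin k x) : IsFPN emin k x := by
  obtain ⟨m, e, -, hm, he, rfl⟩ := hx
  exact ⟨m, e, hm, he, rfl⟩

end IsFPN

lemma abs_round_le {q : ℝ} {n : ℤ} (hq : |q| ≤ n) : |round q| ≤ n := by
  have herr := abs_sub_round q
  rw [abs_sub_comm] at herr
  have hlt : |(round q : ℝ)| < n + 1 := by
    linarith [abs_sub_abs_le_abs_sub (round q : ℝ) q]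
  exact Int.lt_add_one_iff.1 (by exact_mod_cast hlt)

namespace RN

variable {emin k g j : ℤ} {a r y : ℝ}

lemma eq_of_isFPN (h : RN emin k a r) (ha : IsFPN emin k a) : r = a := by
  have hle := h.2 a ha
  rw [sub_self, abs_zero, abs_nonpos_iff, sub_eq_zero] at hle
  exact hle.symm

lemma le_of_le (h : RN emin k a r) (hy : IsFPN emin k y) (hya : y ≤ a) : y ≤ r := by
  by_contra! hry
  have hle := h.2 y hy
  rw [abs_of_nonneg (by linarith), abs_of_nonneg (by linarith)] at hle
  linarith

lemma le_of_ge (h : RN emin k a r) (hy : IsFPN emin k y) (hay : a ≤ y) : r ≤ y := by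
  by_contra! hyr
  have hle := h.2 y hy
  rw [abs_of_nonpos (by linarith), abs_of_nonpos (by linarith)] at hle
  linarith

lemma abs_le_of_abs_le (h : RN emin k a r) (hy : IsFPN emin k y) (hay : |a| ≤ y) : |r| ≤ y :=
  abs_le.2 ⟨h.le_of_le hy.neg (neg_le_of_abs_le hay), h.le_of_ge hy (le_of_abs_le hay)⟩

lemma le_abs_of_le_abs (h : RN emin k a r) (hy : IsFPN emin k y) (hya : y ≤ |a|) : y ≤ |r| := by
  rcases le_abs'.1 hya with hneg | hpos
  · exact le_abs'.2 (Or.inl (h.le_of_ge hy.neg hneg))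
  · exact le_abs'.2 (Or.inr (h.le_of_le hy hpos))

lemma abs_sub_le (h : RN emin k a r) (hk : 0 < k) (hj : emin ≤ j)
    (ha : |a| ≤ (2 : ℝ) ^ (j + k)) : |a - r| ≤ (2 : ℝ) ^ (j - 1) := by
  have hpos : (0 : ℝ) < 2 ^ j := by positivity
  set n : ℤ := round (a / 2 ^ j)
  have hn : |(n : ℝ)| ≤ 2 ^ k := by
    obtain ⟨K, rfl⟩ := Int.eq_ofNat_of_zero_le hk.le
    have hq : |a / 2 ^ j| ≤ ((2 ^ K : ℤ) : ℝ) := by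
      rw [abs_div, abs_of_pos hpos, div_le_iff₀ hpos, mul_comm]
      simpa [zpow_add₀] using ha
    exact_mod_cast abs_round_le hq
  have hnear : IsFPN emin k (n * 2 ^ j) := by
    refine isFPN_of_mem_dyadicGrid (mem_dyadicGrid.2 ⟨n, rfl⟩) hk hj ?_
    rw [abs_mul, abs_of_pos hpos, zpow_add₀ two_ne_zero, mul_comm]
    gcongr
  calc |a - r| ≤ |a - n * 2 ^ j| := h.2 _ hnear
    _ = |a / 2 ^ j - n| * 2 ^ j := by
      rw [← abs_of_pos hpos, ← abs_mul, abs_of_pos hpos, sub_mul, div_mul_cancel₀ _ hpos.ne']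
    _ ≤ 1 / 2 * 2 ^ j := by gcongr; exact abs_sub_round _
    _ = 2 ^ (j - 1) := by rw [zpow_sub_one₀ two_ne_zero]; ring

lemma mem_dyadicGrid (h : RN emin k a r) (hk : 0 < k) (hg : emin ≤ g)
    (ha : a ∈ dyadicGrid g) : r ∈ dyadicGrid g := by
  rcases le_total |a| ((2 : ℝ) ^ (g + k)) with hle | hge
  · rwa [h.eq_of_isFPN (isFPN_of_mem_dyadicGrid ha hk hg hle)]
  · have hr := h.le_abs_of_le_abs (isFPN_two_zpow hk (by omega)) hge
    exact dyadicGrid_antitone (by omega) (h.1.mem_dyadicGrid_of_two_zpow_le hr)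

lemma of_mem_binade {c : ℤ} (h : RN emin k a r) (hk : 0 < k) (hc : emin ≤ c - k + 1)
    (hlow : (2 : ℝ) ^ c ≤ |r|) (hupp : |r| < (2 : ℝ) ^ (c + 1)) :
    r ∈ dyadicGrid (c - k + 1) ∧ |a - r| ≤ (2 : ℝ) ^ (c - k) ∧ (2 : ℝ) ^ (c - 1) ≤ |a| ∧
      |a| ≤ (2 : ℝ) ^ (c + 1) := by
  have haupp : |a| < (2 : ℝ) ^ (c + 1) :=
    not_le.1 fun hge => hupp.not_ge (h.le_abs_of_le_abs (isFPN_two_zpow hk (by omega)) hge)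
  have herr : |a - r| ≤ (2 : ℝ) ^ (c - k) := by
    have herr' := h.abs_sub_le hk hc (haupp.le.trans_eq (by ring_nf))
    rwa [show c - k + 1 - 1 = c - k by ring] at herr'
  refine ⟨h.1.mem_dyadicGrid_of_two_zpow_le hlow, herr, ?_, haupp.le⟩
  have hhalf : (2 : ℝ) ^ (c - k) ≤ 2 ^ (c - 1) := zpow_le_zpow_right₀ one_le_two (by omega)
  have hdouble : (2 : ℝ) ^ c = 2 * 2 ^ (c - 1) := by rw [zpow_sub_one₀ two_ne_zero]; ring
  have htri := abs_sub_abs_le_abs_sub r a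
  rw [abs_sub_comm] at htri
  linarith

end RN

section MagicConstant

variable {p emin N : ℤ} {a z₀ z : ℝ}

lemma RN.magic_mem_Icc (hp : 0 < p) (hN : emin ≤ -N) (ha : |a| ≤ (2 : ℝ) ^ (p - N - 2))
    (hz₀ : RN emin p (3 * (2 : ℝ) ^ (p - N - 2) + a) z₀) :
    z₀ ∈ Set.Icc (2 * (2 : ℝ) ^ (p - N - 2)) (4 * (2 : ℝ) ^ (p - N - 2)) := by
  obtain ⟨ha₁, ha₂⟩ := abs_le.1 ha
  have htwo : 2 * (2 : ℝ) ^ (p - N - 2) = 2 ^ (p - N - 1) := by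
    rw [mul_comm, ← zpow_add_one₀ two_ne_zero]; ring_nf
  have hfour : 4 * (2 : ℝ) ^ (p - N - 2) = 2 ^ (p - N) := by
    rw [show p - N = p - N - 2 + 2 by ring, zpow_add₀ two_ne_zero]; norm_num [mul_comm]
  constructor
  · exact hz₀.le_of_le (htwo ▸ isFPN_two_zpow (by omega) (by omega)) (by linarith)
  · exact hz₀.le_of_ge (hfour ▸ isFPN_two_zpow (by omega) (by omega)) (by linarith)

lemma RN.magic_sub_mem_dyadicGrid (hp : 2 ≤ p) (hN : emin ≤ -N)
    (ha : |a| ≤ (2 : ℝ) ^ (p - N - 2)) (hz₀ : RN emin p (3 * (2 : ℝ) ^ (p - N - 2) + a) z₀) :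
    z₀ - 3 * (2 : ℝ) ^ (p - N - 2) ∈ dyadicGrid (-N) := by
  have hlow : (2 : ℝ) ^ (p - N - 1) ≤ |z₀| := by
    rw [show p - N - 1 = p - N - 2 + 1 by ring, zpow_add_one₀ two_ne_zero, mul_comm]
    exact (hz₀.magic_mem_Icc (by omega) hN ha).1.trans (le_abs_self z₀)
  have hz₀grid : z₀ ∈ dyadicGrid (-N) :=
    dyadicGrid_antitone (by omega) (hz₀.1.mem_dyadicGrid_of_two_zpow_le hlow)
  have hmagic : (3 : ℤ) • (2 : ℝ) ^ (p - N - 2) ∈ dyadicGrid (-N) :=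
    zsmul_mem (two_zpow_mem_dyadicGrid (by omega)) 3
  simpa using sub_mem hz₀grid hmagic

/-- The interval `[2 ^ (p - N - 1), 2 ^ (p - N)]` in which `z₀` lies has unit in the last place
`2 ^ (-N)`, and subtracting the constant back is exact. -/
lemma RN.magic_round (hp : 2 ≤ p) (hN : emin ≤ -N) (ha : |a| ≤ (2 : ℝ) ^ (p - N - 2))
    (hz₀ : RN emin p (3 * (2 : ℝ) ^ (p - N - 2) + a) z₀)
    (hz : RN emin p (z₀ - 3 * (2 : ℝ) ^ (p - N - 2)) z) :
    z ∈ dyadicGrid (-N) ∧ |a - z| ≤ (2 : ℝ) ^ (-N - 1) ∧ |z| ≤ (2 : ℝ) ^ (p - N - 2) := by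
  have hgrid := hz₀.magic_sub_mem_dyadicGrid hp hN ha
  obtain ⟨hlow, hupp⟩ := hz₀.magic_mem_Icc (by omega) hN ha
  have hsub : |z₀ - 3 * (2 : ℝ) ^ (p - N - 2)| ≤ 2 ^ (p - N - 2) :=
    abs_le.2 ⟨by linarith, by linarith⟩
  have hexact : z = z₀ - 3 * (2 : ℝ) ^ (p - N - 2) :=
    hz.eq_of_isFPN <| isFPN_of_mem_dyadicGrid hgrid (by omega) hN <|
      hsub.trans (zpow_le_zpow_right₀ one_le_two (by omega))
  have herr : |3 * (2 : ℝ) ^ (p - N - 2) + a - z₀| ≤ 2 ^ (-N - 1) := by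
    refine hz₀.abs_sub_le (by omega) hN (abs_le.2 ?_)
    obtain ⟨ha₁, ha₂⟩ := abs_le.1 ha
    rw [show -N + p = p - N - 2 + 2 by ring, zpow_add₀ two_ne_zero]
    constructor <;> linarith
  refine ⟨hexact ▸ hgrid, ?_, hexact ▸ hsub⟩
  rwa [hexact, show a - (z₀ - 3 * (2 : ℝ) ^ (p - N - 2)) =
    3 * (2 : ℝ) ^ (p - N - 2) + a - z₀ by ring]

end MagicConstant

/-- With `p₁` the rounded product and `p₂ = b - p₁` its error, `t₁` the rounded difference `u - p₁`
and `t₂ = u - p₁ - t₁` its error, and `v₁` the rounded `u - b`: both errors and all the partial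
results of `((t₁ - v₁) + t₂) - p₂` are `p`-bit floating-point numbers. -/
structure IsExactCompensation (emin p : ℤ) (u b v₁ p₁ t₁ : ℝ) : Prop where
  mul_error : IsFPN emin p (b - p₁)
  sub_error : IsFPN emin p (u - p₁ - t₁)
  sub_head : IsFPN emin p (t₁ - v₁)
  add_sub_error : IsFPN emin p (t₁ - v₁ + (u - p₁ - t₁))
  sub_mul_error : IsFPN emin p (t₁ - v₁ + (u - p₁ - t₁) - (b - p₁))

section IsExactCompensation

variable {p emin g : ℤ} {u b v₁ p₁ t₁ : ℝ}

lemma isExactCompensation_of_mul_eq_zero (hu : IsFPN emin p u) (hb : b = 0)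
    (hv₁ : RN emin p (u - b) v₁) (hp₁ : RN emin p b p₁) (ht₁ : RN emin p (u - p₁) t₁) :
    IsExactCompensation emin p u b v₁ p₁ t₁ := by
  subst hb
  obtain rfl := hp₁.eq_of_isFPN isFPN_zero
  rw [sub_zero] at hv₁ ht₁
  obtain rfl := hv₁.eq_of_isFPN hu
  obtain rfl := ht₁.eq_of_isFPN hu
  constructor <;> simpa using isFPN_zero

lemma abs_rounding_errors_le (hp : 0 < p) (hg : emin ≤ g)
    (hu : |u| ≤ (2 : ℝ) ^ (g + 2 * p - 2)) (hb : |b| ≤ (2 : ℝ) ^ (g + 2 * p - 2))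
    (hv₁ : RN emin p (u - b) v₁) (hp₁ : RN emin p b p₁) (ht₁ : RN emin p (u - p₁) t₁) :
    |b - p₁| ≤ (2 : ℝ) ^ (g + p - 2) ∧ |u - b - v₁| ≤ (2 : ℝ) ^ (g + p - 2) ∧
      |u - p₁ - t₁| ≤ (2 : ℝ) ^ (g + p - 2) := by
  have herr {a r : ℝ} (h : RN emin p a r) (ha : |a| ≤ 2 * (2 : ℝ) ^ (g + 2 * p - 2)) :
      |a - r| ≤ (2 : ℝ) ^ (g + p - 2) := by
    rw [mul_comm, ← zpow_add_one₀ two_ne_zero] at ha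
    have hle := h.abs_sub_le hp (j := g + p - 1) (by omega) (ha.trans_eq (by ring_nf))
    rwa [show g + p - 1 - 1 = g + p - 2 by ring] at hle
  have hp₁le : |p₁| ≤ (2 : ℝ) ^ (g + 2 * p - 2) :=
    hp₁.abs_le_of_abs_le (isFPN_two_zpow hp (by omega)) hb
  exact ⟨herr hp₁ (by linarith [abs_nonneg b]), herr hv₁ (by linarith [abs_sub u b]),
    herr ht₁ (by linarith [abs_sub u p₁])⟩

/-- In terms of the errors `δp` of `p₁`, `δt` of `t₁` and `δv` of `v₁`, the partial results are
`t₁ - v₁ = δp - δt + δv`, then `δp + δv`, then `δv`. -/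
lemma isExactCompensation_of_mem_dyadicGrid (hp : 0 < p) (hg : emin ≤ g)
    (hugrid : u ∈ dyadicGrid g) (hbgrid : b ∈ dyadicGrid g)
    (hu : |u| ≤ (2 : ℝ) ^ (g + 2 * p - 2)) (hb : |b| ≤ (2 : ℝ) ^ (g + 2 * p - 2))
    (hv₁ : RN emin p (u - b) v₁) (hp₁ : RN emin p b p₁) (ht₁ : RN emin p (u - p₁) t₁) :
    IsExactCompensation emin p u b v₁ p₁ t₁ := by
  obtain ⟨hδp, hδv, hδt⟩ := abs_rounding_errors_le hp hg hu hb hv₁ hp₁ ht₁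
  rw [abs_le] at hδp hδv hδt
  have hlimit : (2 : ℝ) ^ (g + p) = 4 * 2 ^ (g + p - 2) := by
    rw [show g + p = g + p - 2 + 2 by ring, zpow_add₀ two_ne_zero]; norm_num [mul_comm]
  have isFPN_of_bounds {y : ℝ} (hy : y ∈ dyadicGrid g) (hlow : -(4 * 2 ^ (g + p - 2)) ≤ y)
      (hupp : y ≤ 4 * 2 ^ (g + p - 2)) : IsFPN emin p y :=
    isFPN_of_mem_dyadicGrid hy hp hg (hlimit ▸ abs_le.2 ⟨hlow, hupp⟩)
  have hp₁grid := hp₁.mem_dyadicGrid hp hg hbgrid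
  have hv₁grid := hv₁.mem_dyadicGrid hp hg (sub_mem hugrid hbgrid)
  have ht₁grid := ht₁.mem_dyadicGrid hp hg (sub_mem hugrid hp₁grid)
  have hp₂grid := sub_mem hbgrid hp₁grid
  have ht₂grid := sub_mem (sub_mem hugrid hp₁grid) ht₁grid
  have hheadgrid := sub_mem ht₁grid hv₁grid
  have hsumgrid := add_mem hheadgrid ht₂grid
  exact
    { mul_error := isFPN_of_bounds hp₂grid (by linarith) (by linarith)
      sub_error := isFPN_of_bounds ht₂grid (by linarith) (by linarith)
      sub_head := isFPN_of_bounds hheadgrid (by linarith) (by linarith)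
      add_sub_error := isFPN_of_bounds hsumgrid (by linarith) (by linarith)
      sub_mul_error :=
        isFPN_of_bounds (sub_mem hsumgrid hp₂grid) (by linarith) (by linarith) }

end IsExactCompensation

section Ulp

variable (p : ℤ) (x : ℝ)

lemma four_mul_ulp : 4 * ulp p x = (2 : ℝ) ^ (Int.log 2 |x| - p + 3) := by
  rw [ulp, show Int.log 2 |x| - p + 3 = Int.log 2 |x| - p + 1 + 2 by ring,
    zpow_add₀ two_ne_zero _ 2]
  norm_num [mul_comm]

lemma eight_mul_ulp_ulp : 8 * ulp p (ulp p x) = (2 : ℝ) ^ (Int.log 2 |x| - 2 * p + 5) := by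
  have hlog (j : ℤ) : Int.log 2 |(2 : ℝ) ^ j| = j := by
    rw [abs_of_pos (by positivity)]
    exact_mod_cast Int.log_zpow (R := ℝ) (b := 2) one_lt_two j
  rw [ulp, ulp, hlog,
    show Int.log 2 |x| - 2 * p + 5 = Int.log 2 |x| - p + 1 - p + 1 + 3 by ring,
    zpow_add₀ two_ne_zero _ 3]
  norm_num [mul_comm]

end Ulp

section Reduction

variable {emin p N c : ℤ} {x R C₁ z : ℝ}

lemma reducedArg_mem_dyadicGrid (hx : IsFPN emin p x) (hR : 0 < R)
    (hRC : (2 : ℝ) ^ (c - 1) ≤ 1 / R) (hC₁ : C₁ ∈ dyadicGrid (c - (p - 2) + 1))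
    (hz : z ∈ dyadicGrid (-N)) (hz0 : z ≠ 0) (herr : |x * R - z| ≤ (2 : ℝ) ^ (-N - 1)) :
    x - z * C₁ ∈ dyadicGrid (c - N - p - 1) := by
  have hxlow : (2 : ℝ) ^ (c - N - 2) ≤ |x| :=
    calc (2 : ℝ) ^ (c - N - 2) = 2 ^ (-N - 1) * 2 ^ (c - 1) := by
          rw [← zpow_add₀ two_ne_zero]; ring_nf
      _ ≤ |x * R| * (1 / R) := by
          gcongr
          exact two_zpow_le_abs_of_abs_sub_le hz hz0 herr
      _ = |x| := by rw [abs_mul, abs_of_pos hR]; field_simp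
  exact sub_mem (dyadicGrid_antitone (by omega) (hx.mem_dyadicGrid_of_two_zpow_le hxlow))
    (dyadicGrid_antitone (by omega) (mul_mem_dyadicGrid hz hC₁))

lemma abs_reducedArg_le (hR : 0 < R) (hRC : 1 / R ≤ (2 : ℝ) ^ (c + 1))
    (hC₁ : |1 / R - C₁| ≤ (2 : ℝ) ^ (c - (p - 2))) (hz : |z| ≤ (2 : ℝ) ^ (p - N - 2))
    (herr : |x * R - z| ≤ (2 : ℝ) ^ (-N - 1)) : |x - z * C₁| ≤ (2 : ℝ) ^ (c - N + 1) :=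
  calc |x - z * C₁| = |(x * R - z) * (1 / R) + z * (1 / R - C₁)| := by
        congr 1; field_simp; ring
    _ ≤ |x * R - z| * (1 / R) + |z| * |1 / R - C₁| := by
        refine (abs_add_le _ _).trans_eq ?_
        rw [abs_mul, abs_mul, abs_of_pos (one_div_pos.2 hR)]
    _ ≤ 2 ^ (-N - 1) * 2 ^ (c + 1) + 2 ^ (p - N - 2) * 2 ^ (c - (p - 2)) := by gcongr
    _ = 2 ^ (c - N + 1) := by
        rw [← zpow_add₀ two_ne_zero, ← zpow_add₀ two_ne_zero, zpow_add_one₀ two_ne_zero]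
        ring_nf

end Reduction

theorem super_accurate_second_step_general (p emin N : ℤ) (hp : 3 < p)
    (x R C₁ C₂ z₀ z u v₁ p₁ p₂ t₁ t₂ : ℝ)
    (hx : IsFPN emin p x)
    (hRpos : 0 < R)
    (hC₁ : RN emin (p - 2) (1 / R) C₁)
    (hC₁big : (2 : ℝ) ^ (p + max (-1) (p + N - 2)) * (2 : ℝ) ^ emin ≤ C₁)
    (hN : IsFPN emin p ((2 : ℝ) ^ (-N)))
    (hxR : |x * R| ≤ (2 : ℝ) ^ (p - N - 2))
    (hz₀ : RN emin p (3 * (2 : ℝ) ^ (p - N - 2) + x * R) z₀)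
    (hz : RN emin p (z₀ - 3 * (2 : ℝ) ^ (p - N - 2)) z)
    (hC₂mult : ∃ k : ℤ, C₂ = (k : ℝ) * (8 * ulp p (ulp p C₁)))
    (hC₂small : |C₂| ≤ 4 * ulp p C₁)
    (hu : u = x - z * C₁)
    (hv₁ : RN emin p (u - z * C₂) v₁)
    (hp₁ : RN emin p (z * C₂) p₁)
    (hp₂ : p₂ = z * C₂ - p₁)
    (ht₁ : RN emin p (u - p₁) t₁)
    (ht₂ : t₂ = (u - p₁) - t₁) :
    IsFPN emin p p₂ ∧ IsFPN emin p t₂ ∧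
    IsFPN emin p (t₁ - v₁) ∧
    IsFPN emin p ((t₁ - v₁) + t₂) ∧
    IsFPN emin p (((t₁ - v₁) + t₂) - p₂) ∧
    v₁ + (((t₁ - v₁) + t₂) - p₂) = x - z * C₁ - z * C₂ := by
  subst hu hp₂ ht₂
  have hNemin : emin ≤ -N := hN.emin_le_of_two_zpow
  obtain ⟨hzgrid, hzerr, hzle⟩ := hz₀.magic_round (by omega) hNemin hxR hz
  suffices h : IsExactCompensation emin p (x - z * C₁) (z * C₂) v₁ p₁ t₁ from
    ⟨h.mul_error, h.sub_error, h.sub_head, h.add_sub_error, h.sub_mul_error, by ring⟩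
  rcases eq_or_ne z 0 with rfl | hz0
  · exact isExactCompensation_of_mul_eq_zero (by simpa using hx) (zero_mul _) hv₁ hp₁ ht₁
  have hC₁pos : 0 < |C₁| := abs_pos.2 (hC₁big.trans_lt' (by positivity)).ne'
  rw [four_mul_ulp] at hC₂small
  rw [eight_mul_ulp_ulp, ← mem_dyadicGrid] at hC₂mult
  set c := Int.log 2 |C₁|
  have hc : p + max (-1) (p + N - 2) + emin ≤ c := by
    rw [← zpow_add₀ two_ne_zero] at hC₁big
    exact (Int.zpow_le_iff_le_log one_lt_two hC₁pos).1
      (by exact_mod_cast hC₁big.trans (le_abs_self C₁))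
  obtain ⟨hC₁grid, hC₁err, hRlow, hRupp⟩ := hC₁.of_mem_binade (c := c) (by omega) (by omega)
    (by exact_mod_cast Int.zpow_log_le_self one_lt_two hC₁pos)
    (by exact_mod_cast Int.lt_zpow_succ_log_self one_lt_two |C₁|)
  rw [abs_of_pos (one_div_pos.2 hRpos)] at hRlow hRupp
  have hugrid := reducedArg_mem_dyadicGrid hx hRpos hRlow hC₁grid hzgrid hz0 hzerr
  have hule := abs_reducedArg_le hRpos hRupp hC₁err hzle hzerr
  have hble : |z * C₂| ≤ (2 : ℝ) ^ (c - N + 1) :=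
    calc |z * C₂| = |z| * |C₂| := abs_mul _ _
      _ ≤ 2 ^ (p - N - 2) * 2 ^ (c - p + 3) := by gcongr
      _ = 2 ^ (c - N + 1) := by rw [← zpow_add₀ two_ne_zero]; ring_nf
  have hexp : c - N + 1 = c - N - 2 * p + 3 + 2 * p - 2 := by ring
  rw [hexp] at hule hble
  exact isExactCompensation_of_mem_dyadicGrid (by omega) (by omega)
    (dyadicGrid_antitone (by omega) hugrid)
    (dyadicGrid_antitone (by omega) (mul_mem_dyadicGrid hzgrid hC₂mult)) hule hble hv₁ hp₁ ht₁

/-- Exact second-step argument reduction (correctness of Algorithm 1). -/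
theorem super_accurate_second_step (p emin N : ℤ) (hp : 4 < p)
    (x R C₁ C₂ z₀ z u v₁ p₁ p₂ t₁ t₂ : ℝ)
    (hx : IsFPN emin p x)
    (hRpos : 0 < R) (hRnorm : IsNormalFPN emin p R)
    (hC₁ : RN emin (p - 2) (1 / R) C₁)
    (hC₁pow : ∀ j : ℤ, C₁ ≠ (2 : ℝ) ^ j)
    (hC₁big : (2 : ℝ) ^ (p + max (-1) (p + N - 2)) * (2 : ℝ) ^ emin ≤ C₁)
    (hN : IsNormalFPN emin p ((2 : ℝ) ^ (-N)))
    (hxR : |x * R| ≤ (2 : ℝ) ^ (p - N - 2) - (2 : ℝ) ^ (-N))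
    (hz₀ : RN emin p (3 * (2 : ℝ) ^ (p - N - 2) + x * R) z₀)
    (hz : RN emin p (z₀ - 3 * (2 : ℝ) ^ (p - N - 2)) z)
    (hC₂fpn : IsFPN emin p C₂)
    (hC₂mult : ∃ k : ℤ, C₂ = (k : ℝ) * (8 * ulp p (ulp p C₁)))
    (hC₂small : |C₂| ≤ 4 * ulp p C₁)
    (hu : u = x - z * C₁)
    (hv₁ : RN emin p (u - z * C₂) v₁)
    (hp₁ : RN emin p (z * C₂) p₁)
    (hp₂ : p₂ = z * C₂ - p₁)
    (ht₁ : RN emin p (u - p₁) t₁)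
    (ht₂ : t₂ = (u - p₁) - t₁) :
    IsFPN emin p p₂ ∧ IsFPN emin p t₂ ∧
    IsFPN emin p (t₁ - v₁) ∧
    IsFPN emin p ((t₁ - v₁) + t₂) ∧
    IsFPN emin p (((t₁ - v₁) + t₂) - p₂) ∧
    v₁ + (((t₁ - v₁) + t₂) - p₂) = x - z * C₁ - z * C₂ :=
  super_accurate_second_step_general p emin N (by omega) x R C₁ C₂ z₀ z u v₁ p₁ p₂ t₁ t₂ hx hRpos
    hC₁ hC₁big hN.isFPN (hxR.trans (sub_le_self _ (by positivity))) hz₀ hz hC₂mult hC₂small hu hv₁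
    hp₁ hp₂ ht₁ ht₂
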